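/- For any non-increasing function f : ℕ → ℕ, there exists a field K, a polynomial ring R over K, and a monomial ideal I of R such that the degree excess function ε(I;n) = d(I^n) − p(I)n equals f(n) for all n ≥ 1. -/

import Mathlib

open MvPolynomial

/-- The maximal generating degree `d(I)` of a homogeneous ideal. -/
noncomputable def maxGenDeg {K : Type*} [Field K] {σ : Type*}
    (I : Ideal (MvPolynomial σ K)) : ℕ :=
  sInf {d | I = Ideal.span {f | f ∈ I ∧ f.totalDegree ≤ d}}

/-- An ideal of a polynomial ring is a monomial ideal if it is generated by monomials. -/
def IsMonomialIdeal {K : Type*} [Field K] {σ : Type*}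
    (I : Ideal (MvPolynomial σ K)) : Prop :=
  ∃ S : Set (σ →₀ ℕ), I = Ideal.span ((fun α => monomial α (1 : K)) '' S)


/-- `n`-fold sumset. -/
def np {M : Type} [AddCommMonoid M] (S : Set M) : ℕ → Set M
  | 0 => {0}
  | n + 1 => {v | ∃ a ∈ S, ∃ b ∈ np S n, v = a + b}

theorem np_add {M : Type} [AddCommMonoid M] (S : Set M) {k l : ℕ} {a b : M}
    (ha : a ∈ np S k) (hb : b ∈ np S l) : a + b ∈ np S (k + l) := by
  induction k generalizing a with
  | zero =>
    have : a = 0 := ha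
    subst this
    simpa using hb
  | succ k ih =>
    obtain ⟨x, hx, y, hy, rfl⟩ := ha
    rw [show k + 1 + l = (k + l) + 1 by omega]
    exact ⟨x, hx, y + b, ih hy, by rw [add_assoc]⟩

/-- Combinatorial version of "maximal generating degree is `d`". -/
def GD {s : ℕ} (T : Set (Fin s → ℕ)) (d : ℕ) : Prop :=
  (∀ v ∈ T, ∃ t ∈ T, t ≤ v ∧ ∑ i, t i ≤ d) ∧
  (∃ v ∈ T, ∑ i, v i = d ∧ ∀ t ∈ T, t ≤ v → t = v)

def Realz (f : ℕ → ℕ) : Prop :=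
  ∃ (s : ℕ) (S : Set (Fin s → ℕ)) (p : ℕ), 1 ≤ p ∧ ∀ n, 1 ≤ n → GD (np S n) (p * n + f n)

def prodSet {a b : ℕ} (S : Set (Fin a → ℕ)) (T : Set (Fin b → ℕ)) : Set (Fin (a + b) → ℕ) :=
  {v | (fun i => v (Fin.castAdd b i)) ∈ S ∧ (fun i => v (Fin.natAdd a i)) ∈ T}

theorem np_prod {a b : ℕ} (S : Set (Fin a → ℕ)) (T : Set (Fin b → ℕ)) (n : ℕ) :
    np (prodSet S T) n = prodSet (np S n) (np T n) := by
  induction n with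
  | zero =>
    ext v
    constructor
    · intro h
      have : v = 0 := h
      subst this
      exact ⟨rfl, rfl⟩
    · rintro ⟨h1, h2⟩
      have h1' : (fun i => v (Fin.castAdd b i)) = 0 := h1
      have h2' : (fun i => v (Fin.natAdd a i)) = 0 := h2
      show v = 0
      funext i
      refine Fin.addCases (fun i => ?_) (fun i => ?_) i
      · exact congrFun h1' i
      · exact congrFun h2' i
  | succ n ih =>
    ext v
    constructor
    · rintro ⟨x, hx, y, hy, rfl⟩
      rw [ih] at hy
      exact ⟨⟨_, hx.1, _, hy.1, rfl⟩, ⟨_, hx.2, _, hy.2, rfl⟩⟩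
    · rintro ⟨⟨x, hx, y, hy, h1⟩, ⟨x', hx', y', hy', h2⟩⟩
      refine ⟨Fin.append x x', ?_, Fin.append y y', ?_, ?_⟩
      · simpa [prodSet] using ⟨hx, hx'⟩
      · rw [ih]
        simpa [prodSet] using ⟨hy, hy'⟩
      · funext i
        refine Fin.addCases (fun i => ?_) (fun i => ?_) i
        · simpa using congrFun h1 i
        · simpa using congrFun h2 i

theorem GD_prod {a b : ℕ} {S : Set (Fin a → ℕ)} {T : Set (Fin b → ℕ)} {d e : ℕ}
    (hS : GD S d) (hT : GD T e) : GD (prodSet S T) (d + e) := by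
  obtain ⟨hS1, v, hv, hvd, hvm⟩ := hS
  obtain ⟨hT1, w, hw, hwd, hwm⟩ := hT
  constructor
  · rintro u ⟨hu1, hu2⟩
    obtain ⟨x, hx, hxu, hxd⟩ := hS1 _ hu1
    obtain ⟨y, hy, hyu, hyd⟩ := hT1 _ hu2
    refine ⟨Fin.append x y, ?_, ?_, ?_⟩
    · simpa [prodSet] using ⟨hx, hy⟩
    · intro i
      refine Fin.addCases (fun i => ?_) (fun i => ?_) i
      · simpa using hxu i
      · simpa using hyu i
    · rw [Fin.sum_univ_add]
      simp only [Fin.append_left, Fin.append_right]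
      omega
  · refine ⟨Fin.append v w, ?_, ?_, ?_⟩
    · simpa [prodSet] using ⟨hv, hw⟩
    · rw [Fin.sum_univ_add]
      simp only [Fin.append_left, Fin.append_right]
      omega
    · rintro t ⟨ht1, ht2⟩ htle
      have e1 := hvm _ ht1 (fun i => by simpa using htle (Fin.castAdd b i))
      have e2 := hwm _ ht2 (fun i => by simpa using htle (Fin.natAdd a i))
      funext i
      refine Fin.addCases (fun i => ?_) (fun i => ?_) i
      · simpa using congrFun e1 i
      · simpa using congrFun e2 i

theorem Realz_add {f g : ℕ → ℕ} (hf : Realz f) (hg : Realz g) :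
    Realz (fun n => f n + g n) := by
  obtain ⟨s, S, p, hp, h⟩ := hf
  obtain ⟨s', S', p', hp', h'⟩ := hg
  refine ⟨s + s', prodSet S S', p + p', by omega, fun n hn => ?_⟩
  rw [np_prod, show (p + p') * n + (f n + g n) = (p * n + f n) + (p' * n + g n) by ring]
  exact GD_prod (h n hn) (h' n hn)

/-- The exponents of `A + (m z)`. -/
def S3 (S0 : Set ℕ) (p m : ℕ) : Set (Fin 3 → ℕ) :=
  {v | v 0 + v 1 = p ∧ ((v 2 = 0 ∧ v 0 ∈ S0) ∨ (v 2 = 1 ∧ v 0 = m))}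

theorem np_le {S0 : Set ℕ} {p : ℕ} (h : ∀ a ∈ S0, a ≤ p) (n : ℕ) :
    ∀ a ∈ np S0 n, a ≤ p * n := by
  induction n with
  | zero =>
    intro a ha
    have : a = 0 := ha
    omega
  | succ n ih =>
    rintro _ ⟨a, ha, b, hb, rfl⟩
    have := h a ha
    have := ih b hb
    rw [mul_add]
    omega

theorem S3_upper {S0 : Set ℕ} {p m : ℕ} (n : ℕ) : ∀ v ∈ np (S3 S0 p m) n,
    v 0 + v 1 = p * n ∧ ∃ a k, k + v 2 = n ∧ a ∈ np S0 k ∧ v 0 = a + v 2 * m := by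
  induction n with
  | zero =>
    intro v hv
    have : v = 0 := hv
    subst this
    exact ⟨by simp, 0, 0, by simp, rfl, by simp⟩
  | succ n ih =>
    rintro _ ⟨x, ⟨hx1, hx2⟩, y, hy, rfl⟩
    obtain ⟨h1, a, k, hk, ha, h0⟩ := ih y hy
    refine ⟨by simp only [Pi.add_apply, mul_add]; omega, ?_⟩
    rcases hx2 with ⟨hz, h⟩ | ⟨hz, h⟩
    · refine ⟨x 0 + a, k + 1, by simp only [Pi.add_apply]; omega, ⟨_, h, _, ha, rfl⟩, ?_⟩
      simp only [Pi.add_apply, hz, h0]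
      ring
    · refine ⟨a, k, by simp only [Pi.add_apply]; omega, ha, ?_⟩
      simp only [Pi.add_apply, hz, h0, h]
      ring

theorem S3_c0 {S0 : Set ℕ} {p m : ℕ} (h : ∀ a ∈ S0, a ≤ p) (n : ℕ) : ∀ v : Fin 3 → ℕ,
    v 0 + v 1 = p * n → v 2 = 0 → v 0 ∈ np S0 n → v ∈ np (S3 S0 p m) n := by
  induction n with
  | zero =>
    intro v h1 h2 h3
    show v = 0
    funext i
    fin_cases i
    · exact h3
    · simp at h1 ⊢; omega
    · exact h2
  | succ n ih =>
    intro v h1 h2 h3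
    obtain ⟨a, ha, b, hb, hab⟩ := h3
    have hap := h a ha
    have hbp := np_le h n b hb
    rw [mul_add] at h1
    refine ⟨![a, p - a, 0], ⟨?_, Or.inl ⟨rfl, ha⟩⟩, ![b, p * n - b, 0], ?_, ?_⟩
    · simp; omega
    · refine ih _ ?_ rfl hb
      simp; omega
    · funext i
      fin_cases i <;> simp <;> omega

theorem S3_c1 {S0 : Set ℕ} {p m : ℕ} (h : ∀ a ∈ S0, a ≤ p) (hm : m ≤ p) (k : ℕ)
    (v : Fin 3 → ℕ) (b : ℕ) (h1 : v 0 + v 1 = p * (k + 1)) (h2 : v 2 = 1)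
    (hb : b ∈ np S0 k) (h0 : v 0 = m + b) : v ∈ np (S3 S0 p m) (k + 1) := by
  have hbp := np_le h k b hb
  rw [mul_add] at h1
  refine ⟨![m, p - m, 0 + 1], ⟨?_, Or.inr ⟨rfl, rfl⟩⟩, ![b, p * k - b, 0], ?_, ?_⟩
  · simp; omega
  · refine S3_c0 h _ _ ?_ rfl hb
    simp; omega
  · funext i
    fin_cases i <;> simp <;> omega

theorem np_mul {S0 : Set ℕ} {m : ℕ} (h2 : 2 * m ∈ np S0 2) (i : ℕ) :
    i * (2 * m) ∈ np S0 (2 * i) := by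
  induction i with
  | zero => simp [np]
  | succ i ih =>
    rw [show (i + 1) * (2 * m) = i * (2 * m) + 2 * m by ring, mul_add]
    exact np_add S0 ih h2

theorem S3_red {S0 : Set ℕ} {p m : ℕ} (h2 : 2 * m ∈ np S0 2) (k : ℕ) (v : Fin 3 → ℕ)
    (hv : v ∈ np (S3 S0 p m) (k + 1)) :
    v 0 + v 1 = p * (k + 1) ∧
      (v 0 ∈ np S0 (k + 1) ∨ (1 ≤ v 2 ∧ ∃ b ∈ np S0 k, v 0 = m + b)) := by
  obtain ⟨h1, a, l, hl, ha, h0⟩ := S3_upper _ v hv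
  refine ⟨h1, ?_⟩
  rcases Nat.even_or_odd' (v 2) with ⟨i, hi | hi⟩
  · left
    have := np_add S0 ha (np_mul h2 i)
    rw [show l + 2 * i = k + 1 by omega] at this
    rw [h0, hi]
    convert this using 1
    ring
  · right
    have := np_add S0 ha (np_mul h2 i)
    rw [show l + 2 * i = k by omega] at this
    refine ⟨by omega, _, this, ?_⟩
    rw [h0, hi]
    ring

theorem Realz_S3 {S0 : Set ℕ} {p m : ℕ} (g : ℕ → ℕ) (hp : 1 ≤ p) (h : ∀ a ∈ S0, a ≤ p)
    (hm : m ≤ p) (hz : 0 ∈ S0) (h2 : 2 * m ∈ np S0 2)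
    (hg : ∀ k, (g (k + 1) = 1 ∧ ∃ b ∈ np S0 k, m + b ∉ np S0 (k + 1)) ∨
      (g (k + 1) = 0 ∧ ∀ b ∈ np S0 k, m + b ∈ np S0 (k + 1))) : Realz g := by
  refine ⟨3, S3 S0 p m, p, hp, ?_⟩
  intro n hn
  obtain ⟨k, rfl⟩ : ∃ k, n = k + 1 := ⟨n - 1, by omega⟩
  have hle0 : ∀ v : Fin 3 → ℕ, ![v 0, v 1, 0] ≤ v := by
    intro v i
    fin_cases i <;> simp
  rcases hg k with ⟨hg, b, hb, hbn⟩ | ⟨hg, hall⟩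
  · constructor
    · intro v hv
      obtain ⟨h1, h3 | ⟨hv2, b', hb', h3⟩⟩ := S3_red h2 k v hv
      · refine ⟨![v 0, v 1, 0], S3_c0 h _ _ h1 rfl h3, hle0 v, ?_⟩
        simp [Fin.sum_univ_three]; omega
      · refine ⟨![v 0, v 1, 1], S3_c1 h hm _ _ b' h1 rfl hb' h3, ?_, ?_⟩
        · intro i
          fin_cases i <;> simp [hv2]
        · simp [Fin.sum_univ_three]; omega
    · have hbp := np_le h k b hb
      have e : (m + b) + (p * (k + 1) - (m + b)) = p * (k + 1) := by
        rw [mul_add]; omega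
      refine ⟨![m + b, p * (k + 1) - (m + b), 1], S3_c1 h hm _ _ b e rfl hb rfl, ?_, ?_⟩
      · simp only [Fin.sum_univ_three, Matrix.cons_val]
        omega
      · intro t ht hle
        obtain ⟨h1, a, l, hl, ha, h0⟩ := S3_upper _ t ht
        have l0 : t 0 ≤ m + b := hle 0
        have l1 : t 1 ≤ p * (k + 1) - (m + b) := hle 1
        have l2 : t 2 ≤ 1 := hle 2
        have e0 : t 0 = m + b := by omega
        have e2 : t 2 = 1 := by
          by_contra hne
          have hz2 : t 2 = 0 := by omega
          rw [hz2] at hl h0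
          simp only [add_zero, zero_mul] at hl h0
          subst hl
          exact hbn (by rw [← e0, h0]; exact ha)
        funext i
        fin_cases i
        · exact e0
        · simp; omega
        · exact e2
  · have hmin : 0 ∈ np S0 (k + 1) := by
      clear hall hg
      generalize k + 1 = n
      induction n with
      | zero => rfl
      | succ n ih => exact ⟨0, hz, 0, ih, rfl⟩
    constructor
    · intro v hv
      obtain ⟨h1, h3⟩ := S3_red h2 k v hv
      have h3 : v 0 ∈ np S0 (k + 1) := by
        rcases h3 with h3 | ⟨_, b, hb, h3⟩
        · exact h3
        · rw [h3]; exact hall b hb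
      refine ⟨![v 0, v 1, 0], S3_c0 h _ _ h1 rfl h3, hle0 v, ?_⟩
      simp [Fin.sum_univ_three]; omega
    · refine ⟨![0, p * (k + 1), 0], S3_c0 h _ _ (by simp) rfl hmin, ?_, ?_⟩
      · simp only [Fin.sum_univ_three, Matrix.cons_val]
        omega
      · intro t ht hle
        obtain ⟨h1, -⟩ := S3_upper _ t ht
        have l0 : t 0 ≤ 0 := hle 0
        have l1 : t 1 ≤ p * (k + 1) := hle 1
        have l2 : t 2 ≤ 0 := hle 2
        funext i
        fin_cases i
        · simp; omega
        · simp; omega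
        · simp; omega

theorem Realz_one (g : ℕ → ℕ) (hg : ∀ n, 1 ≤ n → g n = 1) : Realz g := by
  have hev : ∀ n, ∀ a ∈ np ({0, 2} : Set ℕ) n, Even a := by
    intro n
    induction n with
    | zero =>
      intro a ha
      have : a = 0 := ha
      simp [this]
    | succ n ih =>
      rintro _ ⟨a, ha, b, hb, rfl⟩
      refine Even.add ?_ (ih b hb)
      rcases ha with rfl | rfl <;> decide
  have h0 : ∀ n, 0 ∈ np ({0, 2} : Set ℕ) n := by
    intro n
    induction n with
    | zero => rfl
    | succ n ih => exact ⟨0, by simp, 0, ih, rfl⟩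
  refine Realz_S3 (S0 := {0, 2}) (p := 2) (m := 1) g (by omega) ?_ (by omega) (by simp) ?_ ?_
  · rintro a (rfl | rfl) <;> omega
  · exact ⟨2, by simp, 0, h0 1, rfl⟩
  · intro k
    refine Or.inl ⟨hg _ (by omega), 0, h0 k, fun h => ?_⟩
    have := hev _ _ h
    revert this
    decide

theorem np_four (q n a : ℕ) :
    a ∈ np ({0, 1, q, q + 1} : Set ℕ) n ↔ ∃ j r, j ≤ n ∧ r ≤ n ∧ a = j * q + r := by
  induction n generalizing a with
  | zero =>
    constructor
    · intro h
      have : a = 0 := h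
      exact ⟨0, 0, by simp [this]⟩
    · rintro ⟨j, r, hj, hr, h⟩
      have hj : j = 0 := by omega
      show a = 0
      subst hj
      omega
  | succ n ih =>
    constructor
    · rintro ⟨x, hx, y, hy, rfl⟩
      obtain ⟨j, r, hj, hr, rfl⟩ := (ih y).1 hy
      rcases hx with rfl | rfl | rfl | rfl
      · exact ⟨j, r, by omega, by omega, by ring⟩
      · exact ⟨j, r + 1, by omega, by omega, by ring⟩
      · exact ⟨j + 1, r, by omega, by omega, by ring⟩
      · exact ⟨j + 1, r + 1, by omega, by omega, by ring⟩
    · rintro ⟨j, r, hj, hr, rfl⟩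
      rcases j with _ | j <;> rcases r with _ | r
      · exact ⟨0, by simp, 0, (ih _).2 ⟨0, 0, by omega, by omega, by simp⟩, by simp⟩
      · exact ⟨1, by simp, r, (ih _).2 ⟨0, r, by omega, by omega, by simp⟩, by ring⟩
      · exact ⟨q, by simp, j * q, (ih _).2 ⟨j, 0, by omega, by omega, by simp⟩, by ring⟩
      · exact ⟨q + 1, by simp, j * q + r, (ih _).2 ⟨j, r, by omega, by omega, by simp⟩,
          by ring⟩

theorem Realz_step (g : ℕ → ℕ) (k0 : ℕ) (hk0 : 1 ≤ k0)
    (hg : ∀ n, 1 ≤ n → g n = if n ≤ k0 then 1 else 0) : Realz g := by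
  obtain ⟨q, hq⟩ : ∃ q, q = k0 + 2 := ⟨_, rfl⟩
  obtain ⟨m, hm⟩ : ∃ m, m = (q + 1) / 2 := ⟨_, rfl⟩
  refine Realz_S3 (S0 := {0, 1, q, q + 1}) (p := q + 1) (m := m) g (by omega) ?_ (by omega)
    (by simp) ?_ ?_
  · rintro a (rfl | rfl | rfl | rfl) <;> omega
  · rw [np_four]
    exact ⟨1, 2 * m - q, by omega, by omega, by omega⟩
  · intro k
    rw [hg (k + 1) (by omega)]
    by_cases hk : k + 1 ≤ k0
    · left
      refine ⟨by simp [hk], max m (k + 2) - m, ?_, ?_⟩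
      · rw [np_four]
        exact ⟨0, max m (k + 2) - m, by omega, by omega, by omega⟩
      · rw [np_four]
        rintro ⟨j, r, hj, hr, h⟩
        rcases j with _ | j
        · omega
        · rw [add_mul] at h
          have : 0 ≤ j * q := Nat.zero_le _
          omega
    · right
      refine ⟨by simp [hk], ?_⟩
      intro b hb
      rw [np_four] at hb ⊢
      obtain ⟨j, r, hj, hr, rfl⟩ := hb
      by_cases hc : m + r ≤ k + 1
      · exact ⟨j, m + r, by omega, hc, by ring⟩
      · refine ⟨j + 1, m + r - q, by omega, by omega, ?_⟩
        rw [add_mul]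
        omega

theorem Realz_zero (g : ℕ → ℕ) (hg : ∀ n, 1 ≤ n → g n = 0) : Realz g := by
  have key : ∀ n, np ({fun _ => 1} : Set (Fin 1 → ℕ)) n = {fun _ => n} := by
    intro n
    induction n with
    | zero => rfl
    | succ n ih =>
      ext v
      simp only [np, ih, Set.mem_singleton_iff, exists_eq_left, Set.mem_ofPred_eq]
      rw [show ((fun _ => 1 : Fin 1 → ℕ) + fun _ => n) = fun _ => n + 1 from
        funext fun _ => Nat.add_comm 1 n]
  refine ⟨1, {fun _ => 1}, 1, le_rfl, fun n hn => ?_⟩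
  rw [key, hg n hn]
  constructor
  · rintro v rfl
    exact ⟨_, rfl, le_rfl, by simp⟩
  · exact ⟨_, rfl, by simp, fun t ht _ => ht⟩

theorem Realz_all (N : ℕ) : ∀ f : ℕ → ℕ, Antitone f → f 1 = N → Realz f := by
  induction N with
  | zero =>
    intro f hf h
    exact Realz_zero f fun n hn => by have := hf hn; omega
  | succ N ih =>
    intro f hf h
    have h1 : Realz (fun n => f n - 1) :=
      ih _ (fun a b hab => Nat.sub_le_sub_right (hf hab) 1) (by simp [h])
    have h2 : Realz (fun n => if 0 < f n then 1 else 0) := by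
      by_cases hall : ∀ n, 0 < f n
      · exact Realz_one _ fun n _ => by simp [hall n]
      · push Not at hall
        classical
        have hk := Nat.find_spec hall
        have hkm := fun m => Nat.find_min (H := hall) (m := m)
        generalize Nat.find hall = k at hk hkm
        have hk2 : 2 ≤ k := by
          by_contra hlt
          have := hf (show k ≤ 1 by omega)
          omega
        refine Realz_step _ (k - 1) (by omega) fun n _ => ?_
        by_cases hn : n ≤ k - 1
        · have := hkm n (by omega)
          rw [if_pos hn, if_pos (by omega)]
        · have := hf (show k ≤ n by omega)
          rw [if_neg hn, if_neg (by omega)]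
    have := Realz_add h1 h2
    convert this using 1
    funext n
    split_ifs <;> omega

/-- Monomial ideal with exponent set. -/
noncomputable def mI {s : ℕ} (S : Set (Fin s → ℕ)) : Ideal (MvPolynomial (Fin s) ℚ) :=
  Ideal.span ((fun α => monomial α (1 : ℚ)) '' {α : Fin s →₀ ℕ | ⇑α ∈ S})

theorem mI_pow {s : ℕ} (S : Set (Fin s → ℕ)) (n : ℕ) : mI S ^ n = mI (np S n) := by
  induction n with
  | zero =>
    rw [pow_zero, Ideal.one_eq_top, eq_comm, Ideal.eq_top_iff_one]
    exact Ideal.subset_span ⟨0, rfl, rfl⟩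
  | succ n ih =>
    rw [pow_succ', ih, mI, mI, Ideal.span_mul_span', mI]
    congr 1
    ext x
    simp only [Set.mem_mul, Set.mem_image, Set.mem_ofPred_eq]
    constructor
    · rintro ⟨_, ⟨a, ha, rfl⟩, _, ⟨b, hb, rfl⟩, rfl⟩
      exact ⟨a + b, ⟨_, ha, _, hb, rfl⟩, by simp [monomial_mul]⟩
    · rintro ⟨c, ⟨a, ha, b, hb, hc⟩, rfl⟩
      refine ⟨_, ⟨Finsupp.equivFunOnFinite.symm a, by simpa using ha, rfl⟩,
        _, ⟨Finsupp.equivFunOnFinite.symm b, by simpa using hb, rfl⟩, ?_⟩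
      rw [monomial_mul, one_mul]
      have e : Finsupp.equivFunOnFinite.symm a + Finsupp.equivFunOnFinite.symm b = c := by
        ext i
        simpa using (congrFun hc i).symm
      rw [e]

theorem mem_mI {s : ℕ} (S : Set (Fin s → ℕ)) (x : MvPolynomial (Fin s) ℚ) :
    x ∈ mI S ↔ ∀ xi ∈ x.support, ∃ si : Fin s →₀ ℕ, ⇑si ∈ S ∧ si ≤ xi :=
  mem_ideal_span_monomial_image

theorem maxGenDeg_mI {s : ℕ} (S : Set (Fin s → ℕ)) (d : ℕ) (h : GD S d) :
    maxGenDeg (mI S) = d := by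
  obtain ⟨h1, v, hv, hvd, hmin⟩ := h
  have hmem : d ∈ {d | mI S = Ideal.span {f | f ∈ mI S ∧ f.totalDegree ≤ d}} := by
    show mI S = _
    apply le_antisymm
    · conv_lhs => rw [mI]
      rw [Ideal.span_le]
      rintro _ ⟨α, hα, rfl⟩
      obtain ⟨t, ht, hle, hd⟩ := h1 _ hα
      have hle' : Finsupp.equivFunOnFinite.symm t ≤ α := fun i => by simpa using hle i
      have e : monomial α (1 : ℚ) = monomial (α - Finsupp.equivFunOnFinite.symm t) 1 *
          monomial (Finsupp.equivFunOnFinite.symm t) 1 := by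
        rw [monomial_mul, one_mul, tsub_add_cancel_of_le hle']
      show monomial α (1 : ℚ) ∈ _
      rw [e]
      apply Ideal.mul_mem_left
      apply Ideal.subset_span
      refine ⟨Ideal.subset_span ⟨_, by simpa using ht, rfl⟩, ?_⟩
      rw [totalDegree_monomial _ one_ne_zero, Finsupp.sum_fintype _ _ (fun _ => rfl)]
      simpa using hd
    · rw [Ideal.span_le]
      exact fun x hx => hx.1
  apply le_antisymm
  · exact Nat.sInf_le hmem
  · apply le_csInf ⟨d, hmem⟩
    · intro d' hd'
      have hd' : mI S = Ideal.span {f | f ∈ mI S ∧ f.totalDegree ≤ d'} := hd'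
      by_contra hlt
      have hsub : mI S ≤ mI {u | ∑ i, u i ≤ d' ∧ ∃ t ∈ S, t ≤ u} := by
        conv_lhs => rw [hd']
        rw [Ideal.span_le]
        rintro x ⟨hx, hxd⟩
        show x ∈ mI _
        rw [mem_mI] at hx ⊢
        intro xi hxi
        refine ⟨xi, ⟨?_, ?_⟩, le_rfl⟩
        · have := le_totalDegree hxi
          rw [Finsupp.sum_fintype _ _ (fun _ => rfl)] at this
          omega
        · obtain ⟨si, hsi, hle⟩ := hx xi hxi
          exact ⟨si, hsi, hle⟩
      have hvm : monomial (Finsupp.equivFunOnFinite.symm v) (1 : ℚ) ∈ mI S :=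
        Ideal.subset_span ⟨_, by simpa using hv, rfl⟩
      have := (mem_mI _ _).1 (hsub hvm) (Finsupp.equivFunOnFinite.symm v)
        (by simp [mem_support_iff])
      obtain ⟨u, ⟨hud, t, ht, htu⟩, huv⟩ := this
      have huv' : ⇑u ≤ v := fun i => by simpa using huv i
      have e := hmin t ht (htu.trans huv')
      subst e
      have : ⇑u = t := le_antisymm huv' htu
      rw [this] at hud
      omega

/-- every non-increasing function `f : ℕ → ℕ` is the degree excess
function of a monomial ideal: there are a field `K`, a polynomial ring and a monomial
ideal `I` with `d(I^n) = p·n + f(n)` for all `n ≥ 1`, where `p` is the Kodiyalam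
invariant (the leading coefficient of the eventually linear function `d(I^n)`). -/
theorem antitone_function_is_degree_excess (f : ℕ → ℕ) (hf : Antitone f) :
    ∃ (K : Type) (_ : Field K) (s : ℕ) (I : Ideal (MvPolynomial (Fin s) K)),
      IsMonomialIdeal I ∧ I ≠ ⊥ ∧ I ≠ ⊤ ∧
      ∃ p : ℕ, (∃ c N : ℕ, ∀ n ≥ N, maxGenDeg (I ^ n) = p * n + c) ∧
        ∀ n : ℕ, 1 ≤ n → maxGenDeg (I ^ n) = p * n + f n := by
  obtain ⟨s, S, p, hp, h⟩ := Realz_all _ f hf rfl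
  have key : ∀ n : ℕ, 1 ≤ n → maxGenDeg (mI S ^ n) = p * n + f n := fun n hn => by
    rw [mI_pow]
    exact maxGenDeg_mI _ _ (h n hn)
  have k1 := key 1 le_rfl
  rw [pow_one] at k1
  refine ⟨ℚ, inferInstance, s, mI S, ⟨_, rfl⟩, ?_, ?_, p, ?_, key⟩
  · intro hb
    have : maxGenDeg (mI S) ≤ 0 := by
      rw [hb]
      apply Nat.sInf_le
      show (⊥ : Ideal (MvPolynomial (Fin s) ℚ)) = _
      rw [eq_comm, Ideal.span_eq_bot]
      exact fun x hx => hx.1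
    omega
  · intro hb
    have : maxGenDeg (mI S) ≤ 0 := by
      rw [hb]
      apply Nat.sInf_le
      show (⊤ : Ideal (MvPolynomial (Fin s) ℚ)) = _
      rw [eq_comm, Ideal.eq_top_iff_one]
      exact Ideal.subset_span ⟨trivial, by simp⟩
    omega
  · obtain ⟨N, hN⟩ : sInf (Set.range f) ∈ Set.range f := Nat.sInf_mem (Set.range_nonempty f)
    refine ⟨f N, N + 1, fun n hn => ?_⟩
    rw [key n (by omega)]
    have a := hf (show N ≤ n by omega)
    have b : sInf (Set.range f) ≤ f n := Nat.sInf_le ⟨n, rfl⟩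
    omega
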